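/- Let P ⊆ ℝ^d be a d-dimensional simplicial reflexive polytope and F a facet of P such that every lattice point of F is a vertex of F. Suppose |H_P(F,0)| = d. Then: (1) there is a map y ↦ z_y from 𝒱(F) to 𝒱(F) such that H_P(F,0) = {−y + z_y : y ∈ 𝒱(F)}, and 𝒱(F) is a ℤ-basis of the lattice ℤ^d; (2) for every vertex x ∈ H_P(F,−1) one has −x ∈ 𝒱(F). -/

import Mathlib

noncomputable section

/-- The standard inner product on `ℝ^d`. -/
def dotp {d : ℕ} (x y : Fin d → ℝ) : ℝ := ∑ i, x i * y i

/-- `x` is a point of the lattice `ℤ^d`. -/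
def IsLP {d : ℕ} (x : Fin d → ℝ) : Prop := ∀ i, ∃ n : ℤ, x i = (n : ℝ)

/-- A lattice polytope: convex hull of finitely many lattice points. -/
def IsLatticePolytope {d : ℕ} (P : Set (Fin d → ℝ)) : Prop :=
  ∃ V : Finset (Fin d → ℝ), (∀ v ∈ V, IsLP v) ∧ P = convexHull ℝ (V : Set (Fin d → ℝ))

/-- The dual polytope `P* = {x | ⟨x,y⟩ ≤ 1 ∀ y ∈ P}`. -/
def dualPolytope {d : ℕ} (P : Set (Fin d → ℝ)) : Set (Fin d → ℝ) :=
  {x | ∀ y ∈ P, dotp x y ≤ 1}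

/-- `P` is a reflexive polytope: a (`d`-dimensional) lattice polytope with `0` in its
interior whose dual is again a lattice polytope. -/
def IsReflexive {d : ℕ} (P : Set (Fin d → ℝ)) : Prop :=
  IsLatticePolytope P ∧ (0 : Fin d → ℝ) ∈ interior P ∧ IsLatticePolytope (dualPolytope P)

/-- `F` is a facet of `P` with (uniquely determined) outer normal `u`, normalized by
`⟨u, F⟩ = 1` (possible since `0` is in the interior of `P`). -/
def IsFacetNormal {d : ℕ} (P F : Set (Fin d → ℝ)) (u : Fin d → ℝ) : Prop :=
  F.Nonempty ∧ (∀ y ∈ P, dotp u y ≤ 1) ∧ F = {y ∈ P | dotp u y = 1} ∧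
    Module.finrank ℝ (vectorSpan ℝ F) = d - 1

/-- `F` is a facet of `P`. -/
def IsFacet {d : ℕ} (P F : Set (Fin d → ℝ)) : Prop := ∃ u, IsFacetNormal P F u

/-- `P` is simplicial: every facet has exactly `d` vertices. -/
def IsSimplicial {d : ℕ} (P : Set (Fin d → ℝ)) : Prop :=
  ∀ F, IsFacet P F → (Set.extremePoints ℝ F).ncard = d

/-- The set `B` is a `ℤ`-basis of the lattice `ℤ^d`. -/
def IsZBasis {d : ℕ} (B : Set (Fin d → ℝ)) : Prop :=
  ∃ b : Fin d → (Fin d → ℝ), Function.Injective b ∧ Set.range b = B ∧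
    (∀ i, IsLP (b i)) ∧ ∀ x : Fin d → ℝ, IsLP x → ∃ c : Fin d → ℤ, x = ∑ i, (c i : ℝ) • b i


/-!
The vertices of `F` form a basis `B` of `ℝ^d`, and the normal of `F` is the sum of the coordinates
in `B`. Crossing the ridge opposite to `B i` leads to a neighbouring facet with one new vertex, the
`i`-th opposite vertex. By reflexivity facet normals are integral, so a vertex of height `0` with
negative `i`-th coordinate must lie on the `i`-th neighbouring facet, hence is the `i`-th opposite
vertex. If there are `d` vertices of height `0`, they are therefore exactly the opposite vertices,
and the coordinates of the `i`-th one are nonnegative except for the `i`-th. This prevents `B i`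
and its opposite vertex from lying on a common facet, so by integrality their sum is a lattice point
of `F`, that is, some vertex `B (w i)`.

The normal of the `i`-th neighbouring facet is then the normal of `F` minus the `i`-th coordinate,
so the coordinates in `B` of lattice points are integers. A vertex of height `-1` has coordinates at
least `-1`. If two of them were `-1`, it would coincide, seen from a neighbouring facet, with an
opposite vertex; so it is some `-B i`.
-/

open Set
open Module (Basis Dual finrank finrank_eq_card_basis finrank_fin_fun)

section LinearAlgebra

variable {ι R M : Type*} [CommRing R] [AddCommGroup M] [Module R M] {B B' : Basis ι R M} {i : ι}

lemma sumCoords_eq_sub_of_forall_ne (h : ∀ j ≠ i, B' j = B j) (x : M) :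
    B'.sumCoords x = B.sumCoords x - (1 - B'.sumCoords (B i)) * B.coord i x := by
  suffices B'.sumCoords = B.sumCoords - (1 - B'.sumCoords (B i)) • B.coord i from
    LinearMap.congr_fun this x
  refine B.ext fun j => ?_
  obtain rfl | hj := eq_or_ne j i
  · simp
  · have hBj : B'.sumCoords (B j) = 1 := by rw [← h j hj, B'.sumCoords_self_apply]
    simp [hBj, hj]

lemma coord_eq_add_of_forall_ne (h : ∀ j ≠ i, B' j = B j) (hi : B.coord i (B' i) = -1) {j : ι}
    (hj : j ≠ i) (x : M) : B'.coord j x = B.coord j x + B.coord j (B' i) * B.coord i x := by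
  suffices B'.coord j = B.coord j + B.coord j (B' i) • B.coord i from LinearMap.congr_fun this x
  refine B'.ext fun k => ?_
  obtain rfl | hk := eq_or_ne k i
  · simp only [LinearMap.add_apply, LinearMap.smul_apply, hi]
    simp [hj.symm]
  · have hBk : B.coord i (B' k) = 0 := by simp [h k hk, hk]
    simp only [LinearMap.add_apply, LinearMap.smul_apply, hBk]
    rw [B'.coord_apply, B'.repr_self, h k hk, B.coord_apply, B.repr_self, smul_zero, add_zero]

lemma exists_coord_neg [LinearOrder R] [IsStrictOrderedRing R] [Finite ι] {x : M}
    (hx : B.sumCoords x = 0) (hx0 : x ≠ 0) : ∃ i, B.coord i x < 0 := by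
  cases nonempty_fintype ι
  by_contra! hnonneg
  rw [B.coe_sumCoords_of_fintype, LinearMap.sum_apply,
    Finset.sum_eq_zero_iff_of_nonneg fun i _ => hnonneg i] at hx
  exact hx0 (B.forall_coord_eq_zero_iff.1 fun i => hx i (Finset.mem_univ i))

variable {K V : Type*} [Field K] [AddCommGroup V] [Module K V]

lemma exists_basis_eq_update [Finite ι] [DecidableEq ι] (B : Basis ι K V) {v : V}
    (hv : B.coord i v ≠ 0) : ∃ B' : Basis ι K V, ⇑B' = Function.update B i v := by
  cases nonempty_fintype ι
  have hli : LinearIndependent K (Function.update B i v) :=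
    B.linearIndependent.update i v ⟨1, one_mem _, B.repr v, mem_nonZeroDivisors_of_ne_zero hv,
      by rw [one_smul, B.linearCombination_repr]⟩
  have : Nonempty ι := ⟨i⟩
  exact ⟨basisOfLinearIndependentOfCardEqFinrank hli (finrank_eq_card_basis B).symm,
    coe_basisOfLinearIndependentOfCardEqFinrank _ _⟩

lemma exists_basis_range_eq {s : Set V} (hs : s.Finite)
    (hspan : Submodule.span K s = ⊤) {n : ℕ} (hcard : s.ncard = n) (hn : finrank K V = n) :
    ∃ B : Basis (Fin n) K V, range B = s := by
  have := hs.to_subtype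
  let e : s ≃ Fin n := Finite.equivFinOfCardEq hcard
  have hrange : range (Subtype.val ∘ e.symm) = s := by
    rw [EquivLike.range_comp Subtype.val e.symm, Subtype.range_coe]
  refine ⟨basisOfTopLeSpanOfCardEqFinrank (Subtype.val ∘ e.symm) ?_ (by simp [hn]), ?_⟩
  · rw [hrange, hspan]
  · rw [coe_basisOfTopLeSpanOfCardEqFinrank, hrange]

lemma finrank_span_eq_finrank_vectorSpan_add_one [FiniteDimensional K V] {s : Set V}
    (hs : s.Nonempty) {f : Dual K V} {c : K} (hc : c ≠ 0) (hf : ∀ x ∈ s, f x = c) :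
    finrank K (Submodule.span K s) = finrank K (vectorSpan K s) + 1 := by
  obtain ⟨p, hp⟩ := hs
  have hker : vectorSpan K s ≤ LinearMap.ker f := by
    rw [vectorSpan_eq_span_vsub_set_right K hp, Submodule.span_le]
    rintro _ ⟨x, hx, rfl⟩
    simp [hf x hx, hf p hp]
  have hp_notMem : p ∉ vectorSpan K s := fun h => hc ((hf p hp).symm.trans (hker h))
  have hspan : Submodule.span K s = vectorSpan K s ⊔ Submodule.span K {p} := by
    rw [vectorSpan_eq_span_vsub_set_right K hp, ← Submodule.span_union]
    refine le_antisymm (Submodule.span_le.2 fun x hx => ?_) (Submodule.span_le.2 ?_)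
    · rw [← sub_add_cancel x p]
      exact add_mem (Submodule.subset_span (.inl ⟨x, hx, rfl⟩))
        (Submodule.subset_span (.inr rfl))
    · rintro _ (⟨x, hx, rfl⟩ | rfl)
      · exact sub_mem (Submodule.subset_span hx) (Submodule.subset_span hp)
      · exact Submodule.subset_span hp
  rw [hspan, Submodule.finrank_sup_span_singleton hp_notMem]

end LinearAlgebra

/-- The simplex pivot rule: among the points with `g < 0`, one minimizes the ratio
`(c - f) / (-g)`. -/
lemma exists_pivot {α 𝕜 : Type*} [Field 𝕜] [LinearOrder 𝕜] [IsStrictOrderedRing 𝕜] {V : Set α}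
    (hV : V.Finite) {f g : α → 𝕜} {c : 𝕜} (hf : ∀ x ∈ V, f x ≤ c) (hg : ∃ x ∈ V, g x < 0) :
    ∃ x₀ ∈ V, g x₀ < 0 ∧ ∃ s, f x₀ - s * g x₀ = c ∧ ∀ x ∈ V, f x - s * g x ≤ c := by
  obtain ⟨x₀, ⟨hx₀, hg₀⟩, hmin⟩ := exists_min_image {x ∈ V | g x < 0}
    (fun x => (c - f x) / -g x) (hV.subset (sep_subset _ _)) hg
  have hs : 0 ≤ (c - f x₀) / -g x₀ :=
    div_nonneg (sub_nonneg.2 (hf x₀ hx₀)) (neg_nonneg.2 hg₀.le)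
  refine ⟨x₀, hx₀, hg₀, (c - f x₀) / -g x₀, ?_, fun x hx => ?_⟩
  · field [hg₀.ne]
  · obtain hneg | hnonneg := lt_or_ge (g x) 0
    · linarith [(le_div_iff₀ (neg_pos.2 hneg)).1 (hmin x ⟨hx, hneg⟩)]
    · linarith [hf x hx, mul_nonneg hs hnonneg]

lemma exists_eq_neg_single {ι : Type*} [Fintype ι] [DecidableEq ι] {c : ι → ℤ}
    (hge : ∀ i, -1 ≤ c i) (hsum : ∑ i, c i = -1)
    (huniq : ∀ i j, c i = -1 → c j = -1 → i = j) : ∃ i, c = -Pi.single i 1 := by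
  obtain ⟨i, -, hi⟩ := Finset.exists_lt_of_sum_lt (s := Finset.univ) (f := c) (g := 0)
    (by simp [hsum])
  have hci : c i = -1 := le_antisymm (Int.le_sub_one_of_lt hi) (hge i)
  have hnonneg : ∀ j ∈ Finset.univ.erase i, 0 ≤ c j := fun j hj => by
    by_contra! hneg
    have hcj : c j = -1 := le_antisymm (Int.le_sub_one_of_lt hneg) (hge j)
    exact Finset.ne_of_mem_erase hj (huniq j i hcj hci)
  have hrest : ∑ j ∈ Finset.univ.erase i, c j = 0 := by
    rw [← Finset.add_sum_erase _ _ (Finset.mem_univ i), hci] at hsum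
    linarith
  refine ⟨i, funext fun j => ?_⟩
  obtain rfl | hj := eq_or_ne j i
  · simp [hci]
  · have hcj := (Finset.sum_eq_zero_iff_of_nonneg hnonneg).1 hrest j (by simp [hj])
    simp [hj, hcj]

section Convex

variable {E : Type*} [AddCommGroup E] [Module ℝ E] [TopologicalSpace E]

lemma isExposed_sep_eq {P : Set E} {l : StrongDual ℝ E} {c : ℝ} (hle : ∀ x ∈ P, l x ≤ c) :
    IsExposed ℝ P {x ∈ P | l x = c} := by
  rintro ⟨x₀, hx₀, hl₀⟩
  refine ⟨l, Set.ext fun x => and_congr_right fun hx => ⟨fun h y hy => h ▸ hle y hy, fun h => ?_⟩⟩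
  exact (hle x hx).antisymm (hl₀ ▸ h x₀ hx₀)

variable [IsTopologicalAddGroup E] [ContinuousSMul ℝ E]

lemma convexHull_extremePoints_eq [T2Space E] [LocallyConvexSpace ℝ E] {Q : Set E}
    (hcomp : IsCompact Q) (hconv : Convex ℝ Q) (hfin : (extremePoints ℝ Q).Finite) :
    convexHull ℝ (extremePoints ℝ Q) = Q := by
  rw [← (hfin.isClosed_convexHull ℝ).closure_eq]
  exact closure_convexHull_extremePoints hcomp hconv

lemma exists_neg_of_zero_mem_interior {P : Set E}
    (h0 : (0 : E) ∈ interior P) {f : Dual ℝ E} (hf : f ≠ 0) : ∃ x ∈ P, f x < 0 := by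
  have himage : f '' P ∈ nhds (0 : ℝ) := by
    simpa using (f.isOpenMap_of_finiteDimensional (LinearMap.surjective hf)).image_mem_nhds
      (mem_interior_iff_mem_nhds.1 h0)
  obtain ⟨_, hneg, x, hx, rfl⟩ := ((frequently_lt_nhds (0 : ℝ)).and_eventually himage).exists
  exact ⟨x, hx, hneg⟩

end Convex

section Lattice

variable {d : ℕ}

lemma dotp_eq_dotProductEquiv (u x : Fin d → ℝ) : dotp u x = dotProductEquiv ℝ (Fin d) u x := rfl

lemma dotp_comm (x y : Fin d → ℝ) : dotp x y = dotp y x := dotProduct_comm x y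

lemma exists_forall_dotp_eq (f : Dual ℝ (Fin d → ℝ)) : ∃ q, ∀ x, dotp q x = f x :=
  ⟨(dotProductEquiv ℝ (Fin d)).symm f, fun x => by
    rw [dotp_eq_dotProductEquiv, LinearEquiv.apply_symm_apply]⟩

lemma IsLP.add {x y : Fin d → ℝ} (hx : IsLP x) (hy : IsLP y) : IsLP (x + y) := fun i => by
  obtain ⟨m, hm⟩ := hx i
  obtain ⟨n, hn⟩ := hy i
  exact ⟨m + n, by simp [hm, hn]⟩

lemma IsLP.exists_dotp_eq_intCast {x y : Fin d → ℝ} (hx : IsLP x) (hy : IsLP y) :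
    ∃ m : ℤ, dotp x y = m := by
  choose a ha using hx
  choose b hb using hy
  exact ⟨∑ i, a i * b i, by simp [dotp, ha, hb]⟩

lemma mem_of_forall_mem_dualPolytope {P : Set (Fin d → ℝ)} (hclosed : IsClosed P)
    (hconv : Convex ℝ P) (h0 : 0 ∈ P) {a : Fin d → ℝ}
    (ha : ∀ q ∈ dualPolytope P, dotp q a ≤ 1) : a ∈ P := by
  by_contra haP
  obtain ⟨f, r, hlt, hr⟩ := geometric_hahn_banach_closed_point hconv hclosed haP
  have hr0 : 0 < r := by simpa using hlt 0 h0
  obtain ⟨q, hq⟩ := exists_forall_dotp_eq (r⁻¹ • (f : Dual ℝ (Fin d → ℝ)))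
  have hq' (y) : dotp q y = r⁻¹ * f y := hq y
  have hq_mem : q ∈ dualPolytope P := fun y hy => by
    rw [hq', inv_mul_le_one₀ hr0]
    exact (hlt y hy).le
  refine (ha q hq_mem).not_gt ?_
  rwa [hq', one_lt_inv_mul₀ hr0]

lemma mem_extremePoints_dualPolytope {P : Set (Fin d → ℝ)} {B : Basis (Fin d) ℝ (Fin d → ℝ)}
    (hB : ∀ i, B i ∈ P) {q : Fin d → ℝ} (hq : q ∈ dualPolytope P) (hq1 : ∀ i, dotp q (B i) = 1) :
    q ∈ extremePoints ℝ (dualPolytope P) := by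
  refine ⟨hq, fun x hx y hy hxy => ?_⟩
  have hx1 (i) : dotp x (B i) = 1 := by
    let l : StrongDual ℝ (Fin d → ℝ) := (dotProductEquiv ℝ (Fin d) (B i)).toContinuousLinearMap
    have hl (p) : l p = dotp p (B i) := dotp_comm _ _
    have hle : ∀ p ∈ dualPolytope P, l p ≤ 1 := fun p hp => hl p ▸ hp _ (hB i)
    rw [← hl]
    exact ((isExposed_sep_eq hle).isExtreme.left_mem_of_mem_openSegment hx hy
      ⟨hq, (hl q).trans (hq1 i)⟩ hxy).2
  exact (dotProductEquiv ℝ (Fin d)).injective (B.ext fun i => (hx1 i).trans (hq1 i).symm)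

end Lattice

namespace IsReflexive

variable {d : ℕ} {P : Set (Fin d → ℝ)}

lemma isCompact (hP : IsReflexive P) : IsCompact P := by
  obtain ⟨⟨V, -, rfl⟩, -⟩ := hP
  exact V.finite_toSet.isCompact_convexHull ℝ

lemma convex (hP : IsReflexive P) : Convex ℝ P := by
  obtain ⟨⟨V, -, rfl⟩, -⟩ := hP
  exact convex_convexHull ℝ _

lemma finite_extremePoints (hP : IsReflexive P) : (extremePoints ℝ P).Finite := by
  obtain ⟨⟨V, -, rfl⟩, -⟩ := hP
  exact V.finite_toSet.subset extremePoints_convexHull_subset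

lemma isLP_of_mem_extremePoints (hP : IsReflexive P) {x : Fin d → ℝ}
    (hx : x ∈ extremePoints ℝ P) : IsLP x := by
  obtain ⟨⟨V, hV, rfl⟩, -⟩ := hP
  exact hV _ (extremePoints_convexHull_subset hx)

lemma isLP_of_mem_extremePoints_dual (hP : IsReflexive P) {q : Fin d → ℝ}
    (hq : q ∈ extremePoints ℝ (dualPolytope P)) : IsLP q := by
  obtain ⟨-, -, W, hW, hdual⟩ := hP
  rw [hdual] at hq
  exact hW _ (extremePoints_convexHull_subset hq)

lemma convexHull_extremePoints (hP : IsReflexive P) : convexHull ℝ (extremePoints ℝ P) = P :=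
  convexHull_extremePoints_eq hP.isCompact hP.convex hP.finite_extremePoints

lemma zero_notMem_extremePoints [NeZero d] (hP : IsReflexive P) : 0 ∉ extremePoints ℝ P :=
  disjoint_left.1 (disjoint_interior_extremePoints P) hP.2.1

lemma forall_le_of_forall_extremePoints_le (hP : IsReflexive P) (f : Dual ℝ (Fin d → ℝ)) {c : ℝ}
    (h : ∀ x ∈ extremePoints ℝ P, f x ≤ c) : ∀ x ∈ P, f x ≤ c := by
  intro x hx
  rw [← hP.convexHull_extremePoints] at hx
  exact convexHull_min h (convex_halfSpace_le f.isLinear c) hx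

lemma exists_extremePoints_neg (hP : IsReflexive P) {f : Dual ℝ (Fin d → ℝ)} (hf : f ≠ 0) :
    ∃ x ∈ extremePoints ℝ P, f x < 0 := by
  obtain ⟨x, hx, hneg⟩ := exists_neg_of_zero_mem_interior hP.2.1 hf
  by_contra! hnonneg
  have := hP.forall_le_of_forall_extremePoints_le (-f) (c := 0) (by simpa using hnonneg) x hx
  rw [LinearMap.neg_apply] at this
  linarith

lemma mem_of_forall_isLP (hP : IsReflexive P) {a : Fin d → ℝ}
    (ha : ∀ q ∈ dualPolytope P, IsLP q → dotp q a ≤ 1) : a ∈ P := by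
  refine mem_of_forall_mem_dualPolytope hP.isCompact.isClosed hP.convex
    (interior_subset hP.2.1) fun q hq => ?_
  obtain ⟨-, -, W, hW, hdual⟩ := hP
  have hsub : (W : Set (Fin d → ℝ)) ⊆ {p | dotProductEquiv ℝ (Fin d) a p ≤ 1} := fun w hw => by
    rw [mem_ofPred_eq, ← dotp_eq_dotProductEquiv, dotp_comm]
    exact ha w (hdual ▸ subset_convexHull ℝ _ hw) (hW w hw)
  rw [hdual] at hq
  rw [dotp_comm]
  exact convexHull_min hsub (convex_halfSpace_le (dotProductEquiv ℝ (Fin d) a).isLinear 1) hq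

lemma add_mem (hP : IsReflexive P) {a b : Fin d → ℝ} (ha : a ∈ P) (hb : b ∈ P)
    (hla : IsLP a) (hlb : IsLP b)
    (h : ∀ q ∈ dualPolytope P, dotp q a = 1 → dotp q b ≠ 1) : a + b ∈ P := by
  refine hP.mem_of_forall_isLP fun q hq hlq => ?_
  obtain ⟨m, hm⟩ := hlq.exists_dotp_eq_intCast hla
  obtain ⟨n, hn⟩ := hlq.exists_dotp_eq_intCast hlb
  have hm1 := hq a ha
  have hn1 := hq b hb
  have hne := h q hq
  rw [dotp_eq_dotProductEquiv, map_add, ← dotp_eq_dotProductEquiv, ← dotp_eq_dotProductEquiv]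
  rw [hm] at hm1 hne ⊢
  rw [hn] at hn1 hne ⊢
  norm_cast at hm1 hn1 hne ⊢
  lia

end IsReflexive

/-- A basis of the ambient space formed by the vertices of a simplicial facet of `P`. The facet
normal takes the value `1` on the basis, so it is the functional `B.sumCoords`. -/
structure IsFacetBasis {ι E : Type*} [AddCommGroup E] [Module ℝ E] (P : Set E)
    (B : Basis ι ℝ E) : Prop where
  mem_extremePoints : ∀ i, B i ∈ extremePoints ℝ P
  sumCoords_le_one : ∀ x ∈ P, B.sumCoords x ≤ 1
  mem_range : ∀ x ∈ extremePoints ℝ P, B.sumCoords x = 1 → x ∈ range B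

section Facet

variable {d : ℕ} {P F : Set (Fin d → ℝ)} {u : Fin d → ℝ} {B : Basis (Fin d) ℝ (Fin d → ℝ)}

namespace IsFacetNormal

lemma isExposed (hF : IsFacetNormal P F u) : IsExposed ℝ P F := by
  obtain ⟨-, hle, rfl, -⟩ := hF
  exact isExposed_sep_eq (l := (dotProductEquiv ℝ (Fin d) u).toContinuousLinearMap) hle

lemma extremePoints_eq (hF : IsFacetNormal P F u) :
    extremePoints ℝ F = {x ∈ extremePoints ℝ P | dotp u x = 1} := by
  rw [hF.isExposed.isExtreme.extremePoints_eq, hF.2.2.1]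
  exact Set.ext fun x => ⟨fun h => ⟨h.2, h.1.2⟩, fun h => ⟨⟨h.1.1, h.2⟩, h.1⟩⟩

lemma neZero (hF : IsFacetNormal P F u) : NeZero d := by
  refine ⟨fun hd => ?_⟩
  subst hd
  obtain ⟨⟨x, hx⟩, -, rfl, -⟩ := hF
  simpa [dotp] using hx.2

lemma span_extremePoints (hF : IsFacetNormal P F u) (hP : IsReflexive P) :
    Submodule.span ℝ (extremePoints ℝ F) = ⊤ := by
  have hd := hF.neZero.pos
  have hfin : (extremePoints ℝ F).Finite :=
    hP.finite_extremePoints.subset (hF.extremePoints_eq ▸ sep_subset _ _)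
  have hhull : convexHull ℝ (extremePoints ℝ F) = F := convexHull_extremePoints_eq
    (hF.isExposed.isCompact hP.isCompact) (hF.isExposed.convex hP.convex) hfin
  have hone : ∀ x ∈ F, dotProductEquiv ℝ (Fin d) u x = 1 := fun x hx => (hF.2.2.1 ▸ hx).2
  have hspanF : Submodule.span ℝ F = ⊤ := Submodule.eq_top_of_finrank_eq <| by
    rw [finrank_span_eq_finrank_vectorSpan_add_one hF.1 one_ne_zero hone, hF.2.2.2,
      finrank_fin_fun, Nat.sub_add_cancel hd]
  rw [eq_top_iff, ← hspanF, Submodule.span_le]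
  conv_lhs => rw [← hhull]
  exact convexHull_min Submodule.subset_span (Submodule.convex _)

lemma exists_isFacetBasis (hF : IsFacetNormal P F u) (hP : IsReflexive P) (hs : IsSimplicial P) :
    ∃ B : Basis (Fin d) ℝ (Fin d → ℝ),
      IsFacetBasis P B ∧ extremePoints ℝ F = range B ∧ ∀ x, dotp u x = B.sumCoords x := by
  have hext := hF.extremePoints_eq
  obtain ⟨B, hB⟩ := exists_basis_range_eq
    (hP.finite_extremePoints.subset (hext ▸ sep_subset _ _)) (hF.span_extremePoints hP)
    (hs F ⟨u, hF⟩) (finrank_fin_fun ℝ)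
  rw [← hB] at hext
  have hBi (i) : B i ∈ {x ∈ extremePoints ℝ P | dotp u x = 1} := hext ▸ mem_range_self i
  have hu (x) : dotp u x = B.sumCoords x := by
    have : dotProductEquiv ℝ (Fin d) u = B.sumCoords := B.ext fun i => by
      rw [← dotp_eq_dotProductEquiv, (hBi i).2, B.sumCoords_self_apply]
    exact LinearMap.congr_fun this x
  exact ⟨B, ⟨fun i => (hBi i).1, fun x hx => hu x ▸ hF.2.1 x hx,
    fun x hx hx1 => hext ▸ ⟨hx, (hu x).trans hx1⟩⟩, hB.symm, hu⟩

end IsFacetNormal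

lemma isFacetNormal_of_sumCoords [NeZero d] (hmem : ∀ i, B i ∈ P)
    (hu : ∀ x, dotp u x = B.sumCoords x) (hle : ∀ x ∈ P, B.sumCoords x ≤ 1) :
    IsFacetNormal P {x ∈ P | dotp u x = 1} u := by
  have hBF (i) : B i ∈ {x ∈ P | dotp u x = 1} :=
    ⟨hmem i, by rw [hu, B.sumCoords_self_apply]⟩
  have hne : {x ∈ P | dotp u x = 1}.Nonempty := ⟨B 0, hBF 0⟩
  refine ⟨hne, fun x hx => hu x ▸ hle x hx, rfl, ?_⟩
  have hspan : Submodule.span ℝ {x ∈ P | dotp u x = 1} = ⊤ := by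
    rw [eq_top_iff, ← B.span_eq]
    exact Submodule.span_mono (range_subset_iff.2 hBF)
  have hrank := finrank_span_eq_finrank_vectorSpan_add_one (K := ℝ) hne one_ne_zero
    (f := dotProductEquiv ℝ (Fin d) u) fun x hx => hx.2
  rw [hspan, finrank_top, finrank_fin_fun] at hrank
  exact Nat.eq_sub_of_add_eq hrank.symm

lemma IsSimplicial.isFacetBasis [NeZero d] (hs : IsSimplicial P)
    (hmem : ∀ i, B i ∈ extremePoints ℝ P) (hle : ∀ x ∈ P, B.sumCoords x ≤ 1) :
    IsFacetBasis P B := by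
  obtain ⟨u, hu⟩ := exists_forall_dotp_eq B.sumCoords
  have hF := isFacetNormal_of_sumCoords (fun i => (hmem i).1) hu hle
  have hcard := hs _ ⟨u, hF⟩
  rw [hF.extremePoints_eq] at hcard
  have hrange : range B = {x ∈ extremePoints ℝ P | dotp u x = 1} := by
    refine Set.eq_of_subset_of_ncard_le (range_subset_iff.2 fun i => ⟨hmem i, ?_⟩) ?_
      (finite_of_ncard_ne_zero (hcard.trans_ne (NeZero.ne d)))
    · rw [hu, B.sumCoords_self_apply]
    · rw [hcard, ncard_range_of_injective B.injective, Nat.card_fin]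
  exact ⟨hmem, hle, fun x hx hx1 => hrange ▸ ⟨hx, (hu x).trans hx1⟩⟩

namespace IsFacetBasis

lemma exists_sumCoords_eq_intCast (hB : IsFacetBasis P B) (hP : IsReflexive P) {x : Fin d → ℝ}
    (hx : IsLP x) : ∃ m : ℤ, B.sumCoords x = m := by
  obtain ⟨q, hq⟩ := exists_forall_dotp_eq B.sumCoords
  have hq_ext : q ∈ extremePoints ℝ (dualPolytope P) :=
    mem_extremePoints_dualPolytope (fun i => (hB.mem_extremePoints i).1)
      (fun y hy => hq y ▸ hB.sumCoords_le_one y hy)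
      fun i => by rw [hq, B.sumCoords_self_apply]
  rw [← hq]
  exact (hP.isLP_of_mem_extremePoints_dual hq_ext).exists_dotp_eq_intCast hx

lemma mem_range_of_sumCoords_pos (hB : IsFacetBasis P B) (hP : IsReflexive P) {x : Fin d → ℝ}
    (hx : x ∈ extremePoints ℝ P) (hpos : 0 < B.sumCoords x) : x ∈ range B := by
  refine hB.mem_range x hx ?_
  obtain ⟨m, hm⟩ := hB.exists_sumCoords_eq_intCast hP (hP.isLP_of_mem_extremePoints hx)
  have hle := hB.sumCoords_le_one x hx.1
  rw [hm] at hpos hle ⊢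
  norm_cast at hpos hle ⊢
  lia

lemma exists_neighbor (hB : IsFacetBasis P B) (hP : IsReflexive P) (hs : IsSimplicial P)
    (i : Fin d) : ∃ B' : Basis (Fin d) ℝ (Fin d → ℝ),
      IsFacetBasis P B' ∧ (∀ j ≠ i, B' j = B j) ∧ B.coord i (B' i) < 0 := by
  have : NeZero d := ⟨i.pos.ne'⟩
  have hcoord : B.coord i ≠ 0 := fun h => by simpa using LinearMap.congr_fun h (B i)
  obtain ⟨v, hv, hneg, s, hvs, hle⟩ := exists_pivot hP.finite_extremePoints
    (fun x hx => hB.sumCoords_le_one x hx.1) (hP.exists_extremePoints_neg hcoord)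
  obtain ⟨B', hB'⟩ := exists_basis_eq_update B hneg.ne
  have hself : B' i = v := by rw [hB', Function.update_self]
  have hne (j) (hj : j ≠ i) : B' j = B j := by rw [hB', Function.update_of_ne hj]
  have hsum : B'.sumCoords = B.sumCoords - s • B.coord i := B'.ext fun j => by
    rw [B'.sumCoords_self_apply]
    obtain rfl | hj := eq_or_ne j i
    · rw [hself]
      exact hvs.symm
    · simp [hne j hj, hj]
  refine ⟨B', hs.isFacetBasis (fun j => ?_) ?_, hne, hself ▸ hneg⟩
  · obtain rfl | hj := eq_or_ne j i
    · rwa [hself]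
    · exact hne j hj ▸ hB.mem_extremePoints j
  · rw [hsum]
    exact hP.forall_le_of_forall_extremePoints_le _ hle

end IsFacetBasis

end Facet

/-- The facets adjacent to the facet with basis `B`: the basis `A i` arises from `B` by exchanging
the vertex `B i` for the vertex `A i i` opposite to it, across the ridge spanned by the others. -/
structure IsNeighborFamily {ι E : Type*} [AddCommGroup E] [Module ℝ E] (P : Set E)
    (B : Basis ι ℝ E) (A : ι → Basis ι ℝ E) : Prop where
  isFacetBasis : ∀ i, IsFacetBasis P (A i)
  eq_of_ne : ∀ i, ∀ j ≠ i, A i j = B j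
  coord_opposite_neg : ∀ i, B.coord i (A i i) < 0

lemma IsFacetBasis.exists_isNeighborFamily {d : ℕ} {P : Set (Fin d → ℝ)}
    {B : Basis (Fin d) ℝ (Fin d → ℝ)} (hB : IsFacetBasis P B) (hP : IsReflexive P)
    (hs : IsSimplicial P) : ∃ A, IsNeighborFamily P B A := by
  choose A hA using hB.exists_neighbor hP hs
  exact ⟨A, fun i => (hA i).1, fun i => (hA i).2.1, fun i => (hA i).2.2⟩

namespace IsNeighborFamily

lemma eq_opposite_of_mem_range {ι E : Type*} [AddCommGroup E] [Module ℝ E] {P : Set E}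
    {B : Basis ι ℝ E} {A : ι → Basis ι ℝ E} (hA : IsNeighborFamily P B A) {i : ι} {x : E}
    (hx : x ∈ range (A i)) (hx1 : B.sumCoords x ≠ 1) : x = A i i := by
  obtain ⟨j, rfl⟩ := hx
  obtain rfl | hj := eq_or_ne j i
  · rfl
  · rw [hA.eq_of_ne i j hj, B.sumCoords_self_apply] at hx1
    exact absurd rfl hx1

variable {d : ℕ} {P : Set (Fin d → ℝ)} {B : Basis (Fin d) ℝ (Fin d → ℝ)}
  {A : Fin d → Basis (Fin d) ℝ (Fin d → ℝ)}

lemma sumCoords_neighbor_nonpos (hA : IsNeighborFamily P B A) (hB : IsFacetBasis P B)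
    (hP : IsReflexive P) (i : Fin d) : (A i).sumCoords (B i) ≤ 0 := by
  by_contra! hpos
  obtain ⟨j, hj⟩ := (hA.isFacetBasis i).mem_range_of_sumCoords_pos hP (hB.mem_extremePoints i) hpos
  obtain rfl | hji := eq_or_ne j i
  · have hneg := hA.coord_opposite_neg j
    rw [hj] at hneg
    norm_num at hneg
  · exact hji (B.injective ((hA.eq_of_ne i j hji).symm.trans hj))

lemma eq_opposite (hA : IsNeighborFamily P B A) (hB : IsFacetBasis P B) (hP : IsReflexive P)
    {x : Fin d → ℝ} (hx : x ∈ extremePoints ℝ P) (hx0 : B.sumCoords x = 0) {i : Fin d}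
    (hneg : B.coord i x < 0) : x = A i i := by
  refine hA.eq_opposite_of_mem_range ?_ (hx0.trans_ne zero_ne_one)
  refine (hA.isFacetBasis i).mem_range_of_sumCoords_pos hP hx ?_
  rw [sumCoords_eq_sub_of_forall_ne (hA.eq_of_ne i), hx0]
  nlinarith [hA.sumCoords_neighbor_nonpos hB hP i]

lemma neg_one_le_coord (hA : IsNeighborFamily P B A) (hB : IsFacetBasis P B) (hP : IsReflexive P)
    {x : Fin d → ℝ} (hx : x ∈ P) (hx0 : B.sumCoords x = 0) (i : Fin d) : -1 ≤ B.coord i x := by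
  have hle := (hA.isFacetBasis i).sumCoords_le_one x hx
  rw [sumCoords_eq_sub_of_forall_ne (hA.eq_of_ne i), hx0] at hle
  by_contra! hlt
  nlinarith [hA.sumCoords_neighbor_nonpos hB hP i]

lemma setOf_sumCoords_eq_zero_subset [NeZero d] (hA : IsNeighborFamily P B A)
    (hB : IsFacetBasis P B) (hP : IsReflexive P) :
    {x ∈ extremePoints ℝ P | B.sumCoords x = 0} ⊆ range fun i => A i i := by
  rintro x ⟨hx, hx0⟩
  have hne : x ≠ 0 := fun h => hP.zero_notMem_extremePoints (h ▸ hx)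
  obtain ⟨i, hi⟩ := exists_coord_neg hx0 hne
  exact ⟨i, (hA.eq_opposite hB hP hx hx0 hi).symm⟩

section MaximalHeightZero

variable [NeZero d] (hcard : {x ∈ extremePoints ℝ P | B.sumCoords x = 0}.ncard = d)
include hcard

lemma setOf_sumCoords_eq_zero (hA : IsNeighborFamily P B A) (hB : IsFacetBasis P B)
    (hP : IsReflexive P) :
    {x ∈ extremePoints ℝ P | B.sumCoords x = 0} = range fun i => A i i := by
  refine Set.eq_of_subset_of_ncard_le (hA.setOf_sumCoords_eq_zero_subset hB hP) ?_
    (finite_range _)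
  rw [hcard, ← image_univ]
  simpa using ncard_image_le (finite_univ (α := Fin d)) (f := fun i => A i i)

lemma sumCoords_opposite (hA : IsNeighborFamily P B A) (hB : IsFacetBasis P B)
    (hP : IsReflexive P) (i : Fin d) : B.sumCoords (A i i) = 0 := by
  have hmem : A i i ∈ range fun i => A i i := mem_range_self i
  rw [← hA.setOf_sumCoords_eq_zero hcard hB hP] at hmem
  exact hmem.2

lemma injective_opposite (hA : IsNeighborFamily P B A) (hB : IsFacetBasis P B)
    (hP : IsReflexive P) : Function.Injective fun i => A i i := by
  rw [hA.setOf_sumCoords_eq_zero hcard hB hP, ← image_univ] at hcard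
  exact injOn_univ.1 (injOn_of_ncard_image_eq (by simpa using hcard) finite_univ)

lemma coord_opposite_nonneg (hA : IsNeighborFamily P B A) (hB : IsFacetBasis P B)
    (hP : IsReflexive P) {i j : Fin d} (hj : j ≠ i) : 0 ≤ B.coord j (A i i) := by
  by_contra! hneg
  exact hj (hA.injective_opposite hcard hB hP (hA.eq_opposite hB hP
    ((hA.isFacetBasis i).mem_extremePoints i) (hA.sumCoords_opposite hcard hB hP i) hneg)).symm

/-- A facet through both `A i i` and `B i` would have a normal which is at most `B.sumCoords` on
`A i i`, hence at most `0`. -/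
lemma opposite_add_mem (hA : IsNeighborFamily P B A) (hB : IsFacetBasis P B)
    (hP : IsReflexive P) (i : Fin d) : A i i + B i ∈ P := by
  have hAi := (hA.isFacetBasis i).mem_extremePoints i
  have hBi := hB.mem_extremePoints i
  refine hP.add_mem hAi.1 hBi.1 (hP.isLP_of_mem_extremePoints hAi)
    (hP.isLP_of_mem_extremePoints hBi) fun q hq hqA hqB => ?_
  have hle : dotp q (A i i) ≤ B.sumCoords (A i i) := by
    rw [dotp_eq_dotProductEquiv, B.coe_sumCoords_of_fintype, LinearMap.sum_apply]
    conv_lhs => rw [← B.sum_repr (A i i), map_sum]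
    refine Finset.sum_le_sum fun j _ => ?_
    rw [map_smul, smul_eq_mul, ← dotp_eq_dotProductEquiv, ← B.coord_apply]
    obtain rfl | hj := eq_or_ne j i
    · rw [hqB, mul_one]
    · exact mul_le_of_le_one_right (hA.coord_opposite_nonneg hcard hB hP hj)
        (hq _ (hB.mem_extremePoints j).1)
  rw [hqA, hA.sumCoords_opposite hcard hB hP] at hle
  exact hle.not_gt one_pos

lemma exists_opposite_eq_sub (hA : IsNeighborFamily P B A) (hB : IsFacetBasis P B)
    (hP : IsReflexive P) (hlat : ∀ x ∈ P, IsLP x → B.sumCoords x = 1 → x ∈ range B) :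
    ∃ w : Fin d → Fin d, ∀ i, A i i = B (w i) - B i := by
  have hmem (i) : A i i + B i ∈ range B := by
    refine hlat _ (hA.opposite_add_mem hcard hB hP i) ?_ ?_
    · exact (hP.isLP_of_mem_extremePoints ((hA.isFacetBasis i).mem_extremePoints i)).add
        (hP.isLP_of_mem_extremePoints (hB.mem_extremePoints i))
    · rw [map_add, hA.sumCoords_opposite hcard hB hP, B.sumCoords_self_apply, zero_add]
  choose w hw using hmem
  exact ⟨w, fun i => eq_sub_of_add_eq (hw i).symm⟩

end MaximalHeightZero

section OppositeEqSub

variable {w : Fin d → Fin d}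

lemma ne_of_opposite_eq_sub (hA : IsNeighborFamily P B A) (hw : ∀ i, A i i = B (w i) - B i)
    (i : Fin d) : w i ≠ i := fun h => by
  have hneg := hA.coord_opposite_neg i
  rw [hw, h, sub_self, map_zero] at hneg
  exact hneg.false

lemma coord_opposite_self (hA : IsNeighborFamily P B A) (hw : ∀ i, A i i = B (w i) - B i)
    (i : Fin d) : B.coord i (A i i) = -1 := by
  simp [hw, hA.ne_of_opposite_eq_sub hw i]

lemma sumCoords_neighbor (hA : IsNeighborFamily P B A) (hw : ∀ i, A i i = B (w i) - B i)
    (i : Fin d) (x : Fin d → ℝ) : (A i).sumCoords x = B.sumCoords x - B.coord i x := by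
  have hBi : B i = A i (w i) - A i i := by
    rw [hA.eq_of_ne i _ (hA.ne_of_opposite_eq_sub hw i), hw, sub_sub_cancel]
  have hzero : (A i).sumCoords (B i) = 0 := by
    rw [hBi, map_sub, (A i).sumCoords_self_apply, (A i).sumCoords_self_apply, sub_self]
  rw [sumCoords_eq_sub_of_forall_ne (hA.eq_of_ne i), hzero, sub_zero, one_mul]

lemma exists_coord_eq_intCast (hA : IsNeighborFamily P B A) (hw : ∀ i, A i i = B (w i) - B i)
    (hB : IsFacetBasis P B) (hP : IsReflexive P) {x : Fin d → ℝ} (hx : IsLP x) (i : Fin d) :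
    ∃ m : ℤ, B.coord i x = m := by
  obtain ⟨m, hm⟩ := hB.exists_sumCoords_eq_intCast hP hx
  obtain ⟨n, hn⟩ := (hA.isFacetBasis i).exists_sumCoords_eq_intCast hP hx
  rw [hA.sumCoords_neighbor hw, hm] at hn
  exact ⟨m - n, by rw [Int.cast_sub, ← hn, sub_sub_cancel]⟩

lemma isZBasis (hA : IsNeighborFamily P B A) (hw : ∀ i, A i i = B (w i) - B i)
    (hB : IsFacetBasis P B) (hP : IsReflexive P) : IsZBasis (range B) := by
  refine ⟨B, B.injective, rfl, fun i => hP.isLP_of_mem_extremePoints (hB.mem_extremePoints i),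
    fun x hx => ?_⟩
  choose c hc using hA.exists_coord_eq_intCast hw hB hP hx
  refine ⟨c, ?_⟩
  simp only [← hc, B.coord_apply, B.sum_repr]

lemma coord_opposite_eq_zero (hA : IsNeighborFamily P B A) (hw : ∀ i, A i i = B (w i) - B i)
    (hP : IsReflexive P) (hs : IsSimplicial P) {x : Fin d → ℝ} (hx : x ∈ P)
    (hx1 : B.sumCoords x = -1) {i j : Fin d} (hij : i ≠ j) (hi : B.coord i x = -1)
    (hj : B.coord j x = -1) : B.coord i (A j j) = 0 := by
  obtain ⟨A', hA'⟩ := (hA.isFacetBasis j).exists_isNeighborFamily hP hs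
  have hx0 : (A j).sumCoords x = 0 := by rw [hA.sumCoords_neighbor hw, hx1, hj, sub_self]
  have hge := hA'.neg_one_le_coord (hA.isFacetBasis j) hP hx hx0 i
  rw [coord_eq_add_of_forall_ne (hA.eq_of_ne j) (hA.coord_opposite_self hw j) hij, hi, hj] at hge
  have hnonneg : 0 ≤ B.coord i (A j j) := by
    rw [hw, map_sub, B.coord_apply, B.coord_apply, B.repr_self, B.repr_self,
      Finsupp.single_eq_of_ne hij, sub_zero]
    exact Finsupp.single_nonneg.2 zero_le_one i
  linarith

/-- Seen from the facet `A j`, both `x` and `A i i` have height zero and a negative `i`-th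
coordinate, so they would coincide. -/
lemma eq_of_coord_eq_neg_one (hA : IsNeighborFamily P B A) (hw : ∀ i, A i i = B (w i) - B i)
    (hP : IsReflexive P) (hs : IsSimplicial P) {x : Fin d → ℝ} (hx : x ∈ extremePoints ℝ P)
    (hx1 : B.sumCoords x = -1) {i j : Fin d} (hi : B.coord i x = -1) (hj : B.coord j x = -1) :
    i = j := by
  by_contra hij
  have hAij := hA.coord_opposite_eq_zero hw hP hs hx.1 hx1 hij hi hj
  have hAji := hA.coord_opposite_eq_zero hw hP hs hx.1 hx1 (Ne.symm hij) hj hi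
  have hcoord (y) : (A j).coord i y = B.coord i y := by
    rw [coord_eq_add_of_forall_ne (hA.eq_of_ne j) (hA.coord_opposite_self hw j) hij, hAij,
      zero_mul, add_zero]
  have hopp0 : B.sumCoords (A i i) = 0 := by simp [hw]
  obtain ⟨A', hA'⟩ := (hA.isFacetBasis j).exists_isNeighborFamily hP hs
  have hx_eq : x = A' i i := by
    refine hA'.eq_opposite (hA.isFacetBasis j) hP hx ?_ ?_
    · rw [hA.sumCoords_neighbor hw, hx1, hj, sub_self]
    · rw [hcoord, hi]
      exact neg_one_lt_zero
  have hopp_eq : A i i = A' i i := by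
    refine hA'.eq_opposite (hA.isFacetBasis j) hP ((hA.isFacetBasis i).mem_extremePoints i) ?_ ?_
    · rw [hA.sumCoords_neighbor hw, hopp0, hAji, sub_self]
    · rw [hcoord, hA.coord_opposite_self hw]
      exact neg_one_lt_zero
  rw [hx_eq, ← hopp_eq, hopp0] at hx1
  norm_num at hx1

lemma neg_mem_range (hA : IsNeighborFamily P B A) (hw : ∀ i, A i i = B (w i) - B i)
    (hB : IsFacetBasis P B) (hP : IsReflexive P) (hs : IsSimplicial P) {x : Fin d → ℝ}
    (hx : x ∈ extremePoints ℝ P) (hx1 : B.sumCoords x = -1) : -x ∈ range B := by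
  choose c hc using hA.exists_coord_eq_intCast hw hB hP (hP.isLP_of_mem_extremePoints hx)
  have hge (i) : -1 ≤ c i := by
    have hnonpos : (A i).sumCoords x ≤ 0 := by
      by_contra! hpos
      have hxi : x = A i i := hA.eq_opposite_of_mem_range
        ((hA.isFacetBasis i).mem_range_of_sumCoords_pos hP hx hpos) (by rw [hx1]; norm_num)
      rw [hxi, hw] at hx1
      norm_num at hx1
    rw [hA.sumCoords_neighbor hw, hx1, hc, sub_nonpos] at hnonpos
    exact_mod_cast hnonpos
  have hsum : ∑ i, c i = -1 := by
    rw [B.coe_sumCoords_of_fintype, LinearMap.sum_apply] at hx1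
    simp only [hc] at hx1
    exact_mod_cast hx1
  obtain ⟨i, rfl⟩ := exists_eq_neg_single hge hsum fun i j hi hj =>
    hA.eq_of_coord_eq_neg_one hw hP hs hx hx1 (by simp [hc, hi]) (by simp [hc, hj])
  refine ⟨i, B.ext_elem fun j => ?_⟩
  rw [map_neg, Finsupp.neg_apply, ← B.coord_apply j x, hc, B.repr_self]
  simp [Finsupp.single_apply, Pi.single_apply, eq_comm]

end OppositeEqSub

end IsNeighborFamily

/-- if every lattice point of the facet `F` is a vertex of `F` and
`|H_P(F,0)| = d`, then (1) `H_P(F,0) = {-y + z_y | y ∈ 𝒱(F)}` for suitable `z_y ∈ 𝒱(F)` and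
`𝒱(F)` is a `ℤ`-basis; (2) every vertex `x ∈ H_P(F,-1)` satisfies `-x ∈ 𝒱(F)`. -/
theorem stmt15 {d : ℕ} (P : Set (Fin d → ℝ)) (hP : IsReflexive P) (hs : IsSimplicial P)
    (F : Set (Fin d → ℝ)) (u : Fin d → ℝ) (hF : IsFacetNormal P F u)
    (hlat : ∀ x ∈ F, IsLP x → x ∈ Set.extremePoints ℝ F)
    (hcard : {v ∈ Set.extremePoints ℝ P | dotp u v = 0}.ncard = d) :
    (∃ z : (Fin d → ℝ) → (Fin d → ℝ),
      (∀ y ∈ Set.extremePoints ℝ F, z y ∈ Set.extremePoints ℝ F) ∧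
      {v ∈ Set.extremePoints ℝ P | dotp u v = 0} =
        (fun y => -y + z y) '' Set.extremePoints ℝ F) ∧
    IsZBasis (Set.extremePoints ℝ F) ∧
    ∀ x ∈ Set.extremePoints ℝ P, dotp u x = -1 → -x ∈ Set.extremePoints ℝ F := by
  have := hF.neZero
  obtain ⟨B, hB, hFB, hu⟩ := hF.exists_isFacetBasis hP hs
  obtain ⟨A, hA⟩ := hB.exists_isNeighborFamily hP hs
  have hlatB : ∀ x ∈ P, IsLP x → B.sumCoords x = 1 → x ∈ range B := fun x hx hxl hx1 =>
    hFB ▸ hlat x (hF.2.2.1 ▸ ⟨hx, (hu x).trans hx1⟩) hxl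
  simp only [hu, hFB] at hcard ⊢
  obtain ⟨w, hw⟩ := hA.exists_opposite_eq_sub hcard hB hP hlatB
  refine ⟨⟨Function.extend B (B ∘ w) 0, ?_, ?_⟩, hA.isZBasis hw hB hP,
    fun x hx hx1 => hA.neg_mem_range hw hB hP hs hx hx1⟩
  · rintro _ ⟨i, rfl⟩
    exact ⟨w i, (B.injective.extend_apply (B ∘ w) 0 i).symm⟩
  · rw [hA.setOf_sumCoords_eq_zero hcard hB hP, ← range_comp]
    congr! 2 with i
    simp [hw, B.injective.extend_apply, neg_add_eq_sub]
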